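/- arXiv:2405.09878 — 4 statements merged into one kernel-verified Lean document; each statement's English description precedes it below -/
import Mathlib

section
/- For all natural numbers n, k ≥ 1 and d ≥ 1, every hyperplane arrangement ℋ in Λ_d(n,k) (i.e. n groups of k parallel hyperplanes in ℝ^d in general position modulo parallel hyperplanes) has exactly (k+1)·Σ_{j=0}^{d−1} C(n−1,j)·k^j + k^d·Σ_{j=d}^{n−1} C(j−1,d−1) regions, where the second sum is empty when n−1 < d. -/
noncomputable section

/-- `S` is (the carrier of) an affine subspace of dimension `m` in `ℝ^d`. -/
def IsAffineOfDim (d m : ℕ) (S : Set (EuclideanSpace ℝ (Fin d))) : Prop :=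
  ∃ A : AffineSubspace ℝ (EuclideanSpace ℝ (Fin d)),
    (A : Set (EuclideanSpace ℝ (Fin d))) = S ∧ S.Nonempty ∧ Module.finrank ℝ A.direction = m

/-- A family of hyperplanes `H i ⊆ ℝ^d`, grouped by `g : ι → Fin n` into `n` groups of
prescribed sizes `k l`, is in *general position modulo parallel hyperplanes*:
within each group the hyperplanes are parallel and pairwise distinct, and any selection of
hyperplanes from pairwise distinct groups is in general position. -/
def IsGPPH {ι : Type} [Fintype ι] (d n : ℕ) (g : ι → Fin n) (k : Fin n → ℕ)
    (H : ι → Set (EuclideanSpace ℝ (Fin d))) : Prop :=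
  (∀ l : Fin n, (Finset.univ.filter fun i => g i = l).card = k l) ∧
  (∀ l : Fin n, ∃ w : EuclideanSpace ℝ (Fin d), w ≠ 0 ∧
    ∀ i, g i = l → ∃ c : ℝ, H i = {x | (∑ t, w t * x t) = c}) ∧
  (∀ i i' : ι, i ≠ i' → g i = g i' → H i ≠ H i') ∧
  (∀ S : Finset ι, Set.InjOn g S →
    (S.card ≤ d → IsAffineOfDim d (d - S.card) (⋂ i ∈ S, H i)) ∧
    (d < S.card → (⋂ i ∈ S, H i) = ∅))

/-- The regions of an arrangement whose union is `A`: the connected components of `Aᶜ`. -/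
def regionsOf {d : ℕ} (A : Set (EuclideanSpace ℝ (Fin d))) :
    Set (Set (EuclideanSpace ℝ (Fin d))) :=
  {C | ∃ x ∈ Aᶜ, C = connectedComponentIn Aᶜ x}

/-- The number of regions of an arrangement whose union is `A`. -/
def numRegions {d : ℕ} (A : Set (EuclideanSpace ℝ (Fin d))) : ℕ :=
  (regionsOf A).ncard

/-!
Write each hyperplane as the zero set of an affine form. A region is determined by the set of forms
positive on it, so regions correspond to realizable sign patterns. Removing one hyperplane merges
two patterns exactly when the common pattern is realized on that hyperplane (deletion–restriction),
and by induction the number of regions is the number of subfamilies with a common point. In general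
position modulo parallels these are the selections of at most `d` hyperplanes from pairwise distinct
groups, whence `∑_{#A ≤ d} ∏_{l ∈ A} k_l` regions.
-/

open Finset Topology

section SignPatterns

variable {ι E : Type*} [AddCommGroup E] [Module ℝ E]

/-- The common zero set of the affine forms `f i`, `i ∈ S`: the flat cut out by the hyperplanes
`f i = 0` with index in `S`. -/
def commonZeros (f : ι → E →ᵃ[ℝ] ℝ) (S : Finset ι) : Set E :=
  {x | ∀ i ∈ S, f i x = 0}

/-- The face of an arrangement with a prescribed sign vector: the forms in `Z` vanish, those in `P`
are positive and those in `N` are negative. Indices outside `Z ∪ P ∪ N` are unconstrained. -/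
def signFace (f : ι → E →ᵃ[ℝ] ℝ) (Z P N : Finset ι) : Set E :=
  {x ∈ commonZeros f Z | (∀ i ∈ P, 0 < f i x) ∧ ∀ i ∈ N, f i x < 0}

open scoped Classical in
/-- The sign patterns which the forms in `T` realize on the flat `commonZeros f Z`, each encoded by
the set `P ⊆ T` of forms taking a positive value. -/
def signPatterns [DecidableEq ι] (f : ι → E →ᵃ[ℝ] ℝ) (Z T : Finset ι) : Finset (Finset ι) :=
  {P ∈ T.powerset | (signFace f Z P (T \ P)).Nonempty}

/-- Every hyperplane meets each flat of the others transversally, if at all. Disjoint hyperplanes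
are allowed. -/
def IsTransverse [DecidableEq ι] (f : ι → E →ᵃ[ℝ] ℝ) : Prop :=
  ∀ ⦃S : Finset ι⦄ ⦃i : ι⦄, i ∉ S → (commonZeros f (insert i S)).Nonempty →
    ∃ y ∈ commonZeros f S, f i y ≠ 0

variable {f : ι → E →ᵃ[ℝ] ℝ} {Z P N : Finset ι} {i : ι} {x y : E}

lemma commonZeros_eq_iInter (f : ι → E →ᵃ[ℝ] ℝ) (S : Finset ι) :
    commonZeros f S = ⋂ i ∈ S, {x | f i x = 0} := by
  ext x
  simp [commonZeros]

lemma signFace_subset_commonZeros : signFace f Z P N ⊆ commonZeros f Z :=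
  fun _ hx => hx.1

lemma signFace_empty_empty : signFace f Z ∅ ∅ = commonZeros f Z := by
  simp [signFace]

lemma lineMap_mem_commonZeros (hx : x ∈ commonZeros f Z) (hy : y ∈ commonZeros f Z) (t : ℝ) :
    AffineMap.lineMap x y t ∈ commonZeros f Z := fun i hi => by
  simp [AffineMap.apply_lineMap, hx i hi, hy i hi]

lemma mem_signPatterns_univ [Fintype ι] [DecidableEq ι] :
    P ∈ signPatterns f Z univ ↔ (signFace f Z P Pᶜ).Nonempty := by
  simp [signPatterns, compl_eq_univ_sdiff]

lemma convex_signFace : Convex ℝ (signFace f Z P N) := by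
  have h_inter : signFace f Z P N = (⋂ i ∈ Z, f i ⁻¹' {0}) ∩
      ((⋂ i ∈ P, f i ⁻¹' Set.Ioi 0) ∩ ⋂ i ∈ N, f i ⁻¹' Set.Iio 0) := by
    ext x
    simp [signFace, commonZeros]
  rw [h_inter]
  exact (convex_iInter₂ fun i _ => (convex_singleton 0).affine_preimage (f i)).inter
    ((convex_iInter₂ fun i _ => (convex_Ioi 0).affine_preimage (f i)).inter
      (convex_iInter₂ fun i _ => (convex_Iio 0).affine_preimage (f i)))

lemma eventually_lineMap_mem_signFace (hx : x ∈ signFace f Z P N) (hy : y ∈ commonZeros f Z) :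
    ∀ᶠ t in 𝓝 (0 : ℝ), AffineMap.lineMap x y t ∈ signFace f Z P N := by
  have h_tendsto (i : ι) :
      Filter.Tendsto (fun t : ℝ => f i (AffineMap.lineMap x y t)) (𝓝 0) (𝓝 (f i x)) := by
    simp only [AffineMap.apply_lineMap]
    exact AffineMap.lineMap_continuous.tendsto' _ _ (AffineMap.lineMap_apply_zero _ _)
  filter_upwards [(Filter.eventually_all_finset P).2 fun i hi =>
      (h_tendsto i).eventually_const_lt (hx.2.1 i hi),
    (Filter.eventually_all_finset N).2 fun i hi =>
      (h_tendsto i).eventually_lt_const (hx.2.2 i hi)] with t hP hN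
  exact ⟨lineMap_mem_commonZeros hx.1 hy t, hP, hN⟩

section Insert

variable [DecidableEq ι]

lemma mem_commonZeros_insert : x ∈ commonZeros f (insert i Z) ↔ f i x = 0 ∧ x ∈ commonZeros f Z :=
  forall_mem_insert ..

lemma mem_signFace_insert_zero :
    x ∈ signFace f (insert i Z) P N ↔ f i x = 0 ∧ x ∈ signFace f Z P N := by
  simp only [signFace, mem_commonZeros_insert, Set.mem_ofPred_eq, and_assoc]

lemma mem_signFace_insert_pos :
    x ∈ signFace f Z (insert i P) N ↔ 0 < f i x ∧ x ∈ signFace f Z P N := by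
  simp only [signFace, Set.mem_sep_iff, forall_mem_insert]
  tauto

lemma mem_signFace_insert_neg :
    x ∈ signFace f Z P (insert i N) ↔ f i x < 0 ∧ x ∈ signFace f Z P N := by
  simp only [signFace, Set.mem_sep_iff, forall_mem_insert]
  tauto

lemma nonempty_signFace_insert_zero_of_pos_of_neg
    (hpos : (signFace f Z (insert i P) N).Nonempty)
    (hneg : (signFace f Z P (insert i N)).Nonempty) :
    (signFace f (insert i Z) P N).Nonempty := by
  obtain ⟨y, hy⟩ := hpos
  obtain ⟨x, hx⟩ := hneg
  rw [mem_signFace_insert_pos] at hy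
  rw [mem_signFace_insert_neg] at hx
  have h_image : (f i '' signFace f Z P N).OrdConnected :=
    (convex_signFace.affine_image (f i)).ordConnected
  obtain ⟨z, hz, hz0⟩ := h_image.out (Set.mem_image_of_mem _ hx.2) (Set.mem_image_of_mem _ hy.2)
    ⟨hx.1.le, hy.1.le⟩
  exact ⟨z, mem_signFace_insert_zero.2 ⟨hz0, hz⟩⟩

lemma nonempty_signFace_insert_pos_and_neg_of_zero (hx : x ∈ signFace f (insert i Z) P N)
    (hy : y ∈ commonZeros f Z) (hiy : f i y ≠ 0) :
    (signFace f Z (insert i P) N).Nonempty ∧ (signFace f Z P (insert i N)).Nonempty := by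
  rw [mem_signFace_insert_zero] at hx
  have h_value (s : ℝ) : f i (AffineMap.lineMap x y (s * f i y)) = s * f i y ^ 2 := by
    rw [AffineMap.apply_lineMap, hx.1, AffineMap.lineMap_apply_module]
    simp only [smul_eq_mul]
    ring
  have h_scale : Filter.Tendsto (fun s : ℝ => s * f i y) (𝓝 0) (𝓝 0) :=
    (continuous_mul_const _).tendsto' _ _ (zero_mul _)
  have h_face := h_scale.eventually (eventually_lineMap_mem_signFace hx.2 hy)
  constructor
  · obtain ⟨s, hs, hs_pos⟩ := ((h_face.filter_mono nhdsWithin_le_nhds).and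
      (self_mem_nhdsWithin (s := Set.Ioi (0 : ℝ)))).exists
    exact ⟨_, mem_signFace_insert_pos.2 ⟨by rw [h_value]; exact mul_pos hs_pos (by positivity), hs⟩⟩
  · obtain ⟨s, hs, hs_neg⟩ := ((h_face.filter_mono nhdsWithin_le_nhds).and
      (self_mem_nhdsWithin (s := Set.Iio (0 : ℝ)))).exists
    exact ⟨_, mem_signFace_insert_neg.2
      ⟨by rw [h_value]; exact mul_neg_of_neg_of_pos hs_neg (by positivity), hs⟩⟩

lemma IsTransverse.nonempty_signFace_insert_zero_iff (hf : IsTransverse f) (hi : i ∉ Z) :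
    (signFace f (insert i Z) P N).Nonempty ↔
      (signFace f Z (insert i P) N).Nonempty ∧ (signFace f Z P (insert i N)).Nonempty := by
  refine ⟨fun ⟨x, hx⟩ => ?_, fun h => nonempty_signFace_insert_zero_of_pos_of_neg h.1 h.2⟩
  obtain ⟨y, hy, hiy⟩ := hf hi ⟨x, signFace_subset_commonZeros hx⟩
  exact nonempty_signFace_insert_pos_and_neg_of_zero hx hy hiy

lemma IsTransverse.nonempty_signFace_iff (hf : IsTransverse f) (hi : i ∉ Z) :
    (signFace f Z P N).Nonempty ↔
      (signFace f Z (insert i P) N).Nonempty ∨ (signFace f Z P (insert i N)).Nonempty := by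
  constructor
  · rintro ⟨x, hx⟩
    rcases lt_trichotomy (f i x) 0 with hneg | hzero | hpos
    · exact Or.inr ⟨x, mem_signFace_insert_neg.2 ⟨hneg, hx⟩⟩
    · exact Or.inl
        ((hf.nonempty_signFace_insert_zero_iff hi).1 ⟨x, mem_signFace_insert_zero.2 ⟨hzero, hx⟩⟩).1
    · exact Or.inl ⟨x, mem_signFace_insert_pos.2 ⟨hpos, hx⟩⟩
  · rintro (⟨x, hx⟩ | ⟨x, hx⟩)
    · exact ⟨x, (mem_signFace_insert_pos.1 hx).2⟩
    · exact ⟨x, (mem_signFace_insert_neg.1 hx).2⟩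

lemma card_filter_powerset_insert {T : Finset ι} (hi : i ∉ T) (p : Finset ι → Prop)
    [DecidablePred p] :
    #{U ∈ (insert i T).powerset | p U} =
      #{U ∈ T.powerset | p U} + #{U ∈ T.powerset | p (insert i U)} := by
  simp only [card_filter, sum_powerset_insert hi]

theorem IsTransverse.card_signPatterns_insert (hf : IsTransverse f) {T : Finset ι} (hiZ : i ∉ Z)
    (hiT : i ∉ T) :
    #(signPatterns f Z (insert i T)) =
      #(signPatterns f Z T) + #(signPatterns f (insert i Z) T) := by
  classical
  let pos (P : Finset ι) : Prop := (signFace f Z (insert i P) (T \ P)).Nonempty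
  let neg (P : Finset ι) : Prop := (signFace f Z P (insert i (T \ P))).Nonempty
  have h_insert : #(signPatterns f Z (insert i T)) =
      #{P ∈ T.powerset | neg P} + #{P ∈ T.powerset | pos P} := by
    rw [signPatterns, card_filter_powerset_insert hiT]
    congr 2
    · refine filter_congr fun P hP => ?_
      rw [insert_sdiff_of_notMem _ fun h => hiT (mem_powerset.1 hP h)]
    · refine filter_congr fun P _ => ?_
      rw [insert_sdiff_insert, sdiff_insert_of_notMem hiT]
  have h_deletion : signPatterns f Z T = {P ∈ T.powerset | pos P ∨ neg P} :=
    filter_congr fun P _ => hf.nonempty_signFace_iff hiZ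
  have h_restriction : signPatterns f (insert i Z) T = {P ∈ T.powerset | pos P ∧ neg P} :=
    filter_congr fun P _ => hf.nonempty_signFace_insert_zero_iff hiZ
  rw [h_insert, h_deletion, h_restriction, filter_or, filter_and, card_union_add_card_inter,
    add_comm]

open scoped Classical in
theorem IsTransverse.card_signPatterns (hf : IsTransverse f) {T : Finset ι} (hZT : Disjoint Z T) :
    #(signPatterns f Z T) = #{U ∈ T.powerset | (commonZeros f (Z ∪ U)).Nonempty} := by
  induction T using Finset.induction_on generalizing Z with
  | empty => simp [signPatterns, filter_singleton, signFace_empty_empty]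
  | insert i T hiT ih =>
    rw [disjoint_insert_right] at hZT
    have h_disjoint : Disjoint (insert i Z) T := disjoint_insert_left.2 ⟨hiT, hZT.2⟩
    rw [hf.card_signPatterns_insert hZT.1 hiT, ih hZT.2, ih h_disjoint,
      card_filter_powerset_insert hiT]
    simp only [insert_union, union_insert]

end Insert

section OpenFaces

variable [Fintype ι] [DecidableEq ι]

lemma mem_signFace_compl_iff :
    x ∈ signFace f ∅ P Pᶜ ↔ (∀ i, f i x ≠ 0) ∧ ∀ i, i ∈ P ↔ 0 < f i x := by
  simp only [signFace, commonZeros, notMem_empty, false_imp_iff, implies_true, mem_compl,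
    Set.mem_ofPred_eq, true_and, ← forall_and]
  refine forall_congr' fun i => ?_
  rcases lt_trichotomy (f i x) 0 with hneg | hzero | hpos
  · simp [hneg, hneg.ne, hneg.not_gt]
  · simp [hzero]
  · simp [hpos, hpos.ne', hpos.not_gt]

lemma mem_signFace_positives (hx : ∀ i, f i x ≠ 0) :
    x ∈ signFace f ∅ ({i | 0 < f i x} : Finset ι) ({i | 0 < f i x} : Finset ι)ᶜ :=
  mem_signFace_compl_iff.2 ⟨hx, by simp⟩

lemma injOn_signFace_compl (f : ι → E →ᵃ[ℝ] ℝ) :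
    Set.InjOn (fun P => signFace f ∅ P Pᶜ) (signPatterns f ∅ univ) := by
  rintro P hP Q - (hPQ : signFace f ∅ P Pᶜ = signFace f ∅ Q Qᶜ)
  obtain ⟨x, hxP⟩ := mem_signPatterns_univ.1 hP
  have hxQ := hPQ ▸ hxP
  ext i
  rw [(mem_signFace_compl_iff.1 hxP).2, (mem_signFace_compl_iff.1 hxQ).2]

end OpenFaces

end SignPatterns

section Components

variable {ι E : Type*} [TopologicalSpace E]

lemma pos_of_isPreconnected {g : E → ℝ} {C : Set E} (hC : IsPreconnected C)
    (hg : ContinuousOn g C) (h0 : ∀ z ∈ C, g z ≠ 0) {x y : E} (hx : x ∈ C) (hy : y ∈ C)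
    (hgx : 0 < g x) : 0 < g y := by
  by_contra! hgy
  obtain ⟨z, hz, hz0⟩ := hC.intermediate_value hy hx hg ⟨hgy, hgx.le⟩
  exact h0 z hz hz0

variable [AddCommGroup E] [Module ℝ E] [Fintype ι] [DecidableEq ι]
  {f : ι → E →ᵃ[ℝ] ℝ} {P : Finset ι} {x : E}

lemma connectedComponentIn_eq_signFace [ContinuousAdd E] [ContinuousSMul ℝ E]
    (hf : ∀ i, Continuous (f i)) (hx : x ∈ signFace f ∅ P Pᶜ) :
    connectedComponentIn {y | ∀ i, f i y ≠ 0} x = signFace f ∅ P Pᶜ := by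
  have hx_ne := (mem_signFace_compl_iff.1 hx).1
  refine Set.Subset.antisymm (fun y hy => ?_) <|
    convex_signFace.isPreconnected.subset_connectedComponentIn hx
      fun y hy => (mem_signFace_compl_iff.1 hy).1
  have h_ne := connectedComponentIn_subset {y | ∀ i, f i y ≠ 0} x
  have h_pos {a b : E} (ha : a ∈ connectedComponentIn {y | ∀ i, f i y ≠ 0} x)
      (hb : b ∈ connectedComponentIn {y | ∀ i, f i y ≠ 0} x) (i : ι) : 0 < f i a → 0 < f i b :=
    pos_of_isPreconnected isPreconnected_connectedComponentIn (hf i).continuousOn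
      (fun z hz => h_ne hz i) ha hb
  have hx_mem : x ∈ connectedComponentIn {y | ∀ i, f i y ≠ 0} x := mem_connectedComponentIn hx_ne
  exact mem_signFace_compl_iff.2 ⟨h_ne hy, fun i =>
    ((mem_signFace_compl_iff.1 hx).2 i).trans ⟨h_pos hx_mem hy i, h_pos hy hx_mem i⟩⟩

theorem setOf_connectedComponentIn_eq_image_signPatterns [ContinuousAdd E] [ContinuousSMul ℝ E]
    (hf : ∀ i, Continuous (f i)) :
    {C | ∃ x ∈ {y | ∀ i, f i y ≠ 0}, C = connectedComponentIn {y | ∀ i, f i y ≠ 0} x} =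
      (fun P => signFace f ∅ P Pᶜ) '' signPatterns f ∅ univ := by
  ext C
  constructor
  · rintro ⟨x, hx, rfl⟩
    have hx_face := mem_signFace_positives hx
    refine ⟨_, ?_, (connectedComponentIn_eq_signFace hf hx_face).symm⟩
    exact mem_signPatterns_univ.2 ⟨x, hx_face⟩
  · rintro ⟨P, hP, rfl⟩
    obtain ⟨x, hx⟩ := mem_signPatterns_univ.1 hP
    exact ⟨x, (mem_signFace_compl_iff.1 hx).1, (connectedComponentIn_eq_signFace hf hx).symm⟩

end Components

section Counting

variable {ι κ : Type*} [Fintype ι] [DecidableEq κ]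

open scoped Classical in
lemma card_injOn_image_eq (g : ι → κ) (A : Finset κ) :
    #{U : Finset ι | Set.InjOn g U ∧ U.image g = A} = ∏ l ∈ A, #{i | g i = l} := by
  rw [← prod_coe_sort, ← Fintype.card_piFinset]
  symm
  have h_section {s : A → ι} (hs : s ∈ Fintype.piFinset fun l : A => {i | g i = l}) (l : A) :
      g (s l) = l := by
    simpa using Fintype.mem_piFinset.1 hs l
  refine card_nbij (fun s : A → ι => univ.image s) (fun s hs => ?_)
    (fun s hs t ht (hst : univ.image s = univ.image t) => ?_) (fun U hU => ?_)
  · have h_comp : g ∘ s = Subtype.val := funext (h_section hs)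
    refine mem_filter.2 ⟨mem_univ _, ?_, ?_⟩
    · rw [coe_image, coe_univ, Set.image_univ]
      rintro _ ⟨l, rfl⟩ _ ⟨m, rfl⟩ hlm
      rw [h_section hs, h_section hs, Subtype.val_inj] at hlm
      rw [hlm]
    · rw [image_image, h_comp, univ_eq_attach, attach_image_val]
  · funext l
    have hl : s l ∈ univ.image t := hst ▸ mem_image_of_mem s (mem_univ l)
    obtain ⟨m, -, hm⟩ := mem_image.1 hl
    have hml : m = l := Subtype.ext (by rw [← h_section ht, ← h_section hs, hm])
    rw [← hm, hml]
  · obtain ⟨h_inj, rfl⟩ := (mem_filter.1 hU).2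
    choose s hs_mem hs_section using fun l : U.image g => mem_image.1 l.2
    refine ⟨s, by simpa using hs_section, Subset.antisymm ?_ fun i hi => ?_⟩
    · simpa [image_subset_iff] using hs_mem
    · have hgi := mem_image_of_mem g hi
      have h_eq : s ⟨g i, hgi⟩ = i := h_inj (hs_mem _) hi (hs_section _)
      exact mem_image.2 ⟨_, mem_univ _, h_eq⟩

variable [Fintype κ]

open scoped Classical in
theorem card_injOn_card_le (g : ι → κ) (d : ℕ) :
    #{U : Finset ι | Set.InjOn g U ∧ #U ≤ d} =
      ∑ A : Finset κ with #A ≤ d, ∏ l ∈ A, #{i | g i = l} := by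
  have h_maps : Set.MapsTo (image g) ({U : Finset ι | Set.InjOn g U ∧ #U ≤ d} : Finset (Finset ι))
      ({A : Finset κ | #A ≤ d} : Finset (Finset κ)) := fun U hU => by
    obtain ⟨-, hU⟩ := (mem_filter.1 hU).2
    simpa using card_image_le.trans hU
  rw [card_eq_sum_card_fiberwise h_maps]
  refine sum_congr rfl fun A hA => ?_
  rw [← card_injOn_image_eq g A, filter_filter]
  congr 1
  refine filter_congr fun U _ => ⟨fun h => ⟨h.1.1, h.2⟩, fun ⟨h_inj, h_image⟩ => ?_⟩
  have hA' : #A ≤ d := (mem_filter.1 hA).2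
  rw [← h_image, card_image_of_injOn h_inj] at hA'
  exact ⟨⟨h_inj, hA'⟩, h_image⟩

end Counting

section BinomialSums

variable {κ R : Type*} [Fintype κ] [CommSemiring R]

lemma sum_card_le_pow_card (k : R) (d : ℕ) :
    ∑ A : Finset κ with #A ≤ d, k ^ #A =
      ∑ j ∈ range (d + 1), ((Fintype.card κ).choose j : R) * k ^ j := by
  have h_maps : ∀ A ∈ ({A : Finset κ | #A ≤ d} : Finset (Finset κ)), #A ∈ range (d + 1) := by
    simp
  rw [← sum_fiberwise_of_maps_to h_maps]
  refine sum_congr rfl fun j hj => ?_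
  have h_fiber : ({A ∈ ({A | #A ≤ d} : Finset (Finset κ)) | #A = j}) = powersetCard j univ := by
    ext A
    have hjd : j < d + 1 := mem_range.1 hj
    simp only [mem_filter, mem_univ, true_and, mem_powersetCard_univ]
    omega
  rw [h_fiber, sum_powersetCard, card_univ, nsmul_eq_mul]

lemma sum_range_succ_choose_succ_mul_pow (k : R) (m d : ℕ) :
    ∑ j ∈ range (d + 1), ((m + 1).choose j : R) * k ^ j =
      (k + 1) * ∑ j ∈ range d, (m.choose j : R) * k ^ j + k ^ d * m.choose d := by
  induction d with
  | zero => simp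
  | succ d ih =>
    rw [sum_range_succ, ih, sum_range_succ _ d, Nat.choose_succ_succ]
    push_cast
    ring

lemma sum_Icc_pred_choose_pred {d : ℕ} (hd : 1 ≤ d) (m : ℕ) :
    ∑ j ∈ Icc d m, (j - 1).choose (d - 1) = m.choose d := by
  obtain ⟨e, rfl⟩ := Nat.exists_eq_add_of_le' hd
  cases m with
  | zero => simp
  | succ m =>
    rw [← Nat.sum_Icc_choose, ← map_add_right_Icc, sum_map]
    rfl

theorem sum_card_le_pow_card_eq_add [Nonempty κ] (k : R) {d : ℕ} (hd : 1 ≤ d) :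
    ∑ A : Finset κ with #A ≤ d, k ^ #A =
      (k + 1) * ∑ j ∈ range d, ((Fintype.card κ - 1).choose j : R) * k ^ j +
        k ^ d * (∑ j ∈ Icc d (Fintype.card κ - 1), (j - 1).choose (d - 1) : ℕ) := by
  rw [sum_Icc_pred_choose_pred hd, ← sum_range_succ_choose_succ_mul_pow,
    Nat.sub_add_cancel Fintype.card_pos, sum_card_le_pow_card]

end BinomialSums

lemma IsAffineOfDim.dim_unique {d m m' : ℕ} {S : Set (EuclideanSpace ℝ (Fin d))}
    (h : IsAffineOfDim d m S) (h' : IsAffineOfDim d m' S) : m = m' := by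
  obtain ⟨A, hA, -, rfl⟩ := h
  obtain ⟨B, hB, -, rfl⟩ := h'
  rw [SetLike.coe_injective (hA.trans hB.symm)]

namespace IsGPPH

variable {d n : ℕ} {ι : Type} [Fintype ι] {g : ι → Fin n} {k : Fin n → ℕ}
  {H : ι → Set (EuclideanSpace ℝ (Fin d))} {f : ι → EuclideanSpace ℝ (Fin d) →ᵃ[ℝ] ℝ}

lemma exists_affineMap (hGP : IsGPPH d n g k H) :
    ∃ f : ι → EuclideanSpace ℝ (Fin d) →ᵃ[ℝ] ℝ, (H = fun i => {x | f i x = 0}) ∧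
      ∀ i j, g i = g j → (f i).linear = (f j).linear := by
  obtain ⟨-, h_parallel, -, -⟩ := hGP
  choose w _ hw using h_parallel
  choose c hc using fun i => hw (g i) i rfl
  refine ⟨fun i => (innerₗ _ (w (g i))).toAffineMap - AffineMap.const ℝ _ (c i), ?_,
    fun i j hij => by simp [hij]⟩
  ext i x
  simp [hc, PiLp.inner_apply, sub_eq_zero, mul_comm]

lemma nonempty_commonZeros_iff (hGP : IsGPPH d n g k fun i => {x | f i x = 0})
    (h_linear : ∀ i j, g i = g j → (f i).linear = (f j).linear) {S : Finset ι} :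
    (commonZeros f S).Nonempty ↔ Set.InjOn g S ∧ #S ≤ d := by
  obtain ⟨-, -, h_distinct, h_general⟩ := hGP
  constructor
  · rintro ⟨x, hx⟩
    have h_inj : Set.InjOn g S := fun i hi j hj hij => by
      by_contra h_ne
      have h_eq : f i = f j :=
        AffineMap.ext_linear (h_linear i j hij) ((hx i hi).trans (hx j hj).symm)
      exact h_distinct i j h_ne hij (by simp only [h_eq])
    refine ⟨h_inj, not_lt.1 fun h_card => ?_⟩
    rw [commonZeros_eq_iInter, (h_general S h_inj).2 h_card] at hx
    exact hx
  · rintro ⟨h_inj, h_card⟩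
    obtain ⟨-, -, h_nonempty, -⟩ := (h_general S h_inj).1 h_card
    rwa [commonZeros_eq_iInter]

lemma isTransverse [DecidableEq ι] (hGP : IsGPPH d n g k fun i => {x | f i x = 0})
    (h_linear : ∀ i j, g i = g j → (f i).linear = (f j).linear) : IsTransverse f := by
  intro S i hi h_nonempty
  by_contra! h_zero
  obtain ⟨h_inj, h_card⟩ := (hGP.nonempty_commonZeros_iff h_linear).1 h_nonempty
  have h_eq : commonZeros f (insert i S) = commonZeros f S := by
    ext y
    rw [mem_commonZeros_insert, and_iff_right_of_imp (h_zero y)]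
  rw [commonZeros_eq_iInter, commonZeros_eq_iInter] at h_eq
  have h_card_insert := card_insert_of_notMem hi
  obtain ⟨-, -, -, h_general⟩ := hGP
  have h_dim := (h_general (insert i S) h_inj).1 h_card
  have h_dim' := (h_general S (h_inj.mono (coe_subset.2 (subset_insert i S)))).1 (by omega)
  have h_dim_eq := (h_eq ▸ h_dim).dim_unique h_dim'
  omega

end IsGPPH

lemma numRegions_eq_card_signPatterns {ι : Type*} [Fintype ι] [DecidableEq ι] {d : ℕ}
    (f : ι → EuclideanSpace ℝ (Fin d) →ᵃ[ℝ] ℝ) :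
    numRegions (⋃ i, {x | f i x = 0}) = #(signPatterns f ∅ univ) := by
  have h_compl : (⋃ i, {x | f i x = 0})ᶜ = {x | ∀ i, f i x ≠ 0} := by
    ext x
    simp
  rw [numRegions, regionsOf, h_compl, setOf_connectedComponentIn_eq_image_signPatterns
    fun i => (f i).continuous_of_finiteDimensional, (injOn_signFace_compl f).ncard_image,
    Set.ncard_coe_finset]

theorem numRegions_of_isGPPH_general {d n : ℕ} {ι : Type} [Fintype ι] {g : ι → Fin n}
    {k : Fin n → ℕ} {H : ι → Set (EuclideanSpace ℝ (Fin d))} (hGP : IsGPPH d n g k H) :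
    numRegions (⋃ i, H i) = ∑ A : Finset (Fin n) with #A ≤ d, ∏ l ∈ A, k l := by
  classical
  obtain ⟨f, rfl, h_linear⟩ := hGP.exists_affineMap
  calc numRegions (⋃ i, {x | f i x = 0})
      = #(signPatterns f ∅ univ) := numRegions_eq_card_signPatterns f
    _ = #{U ∈ univ.powerset | (commonZeros f (∅ ∪ U)).Nonempty} :=
        (hGP.isTransverse h_linear).card_signPatterns (disjoint_empty_left _)
    _ = #{U : Finset ι | Set.InjOn g U ∧ #U ≤ d} := by
        simp only [empty_union, powerset_univ, hGP.nonempty_commonZeros_iff h_linear]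
    _ = ∑ A : Finset (Fin n) with #A ≤ d, ∏ l ∈ A, #{i | g i = l} := card_injOn_card_le g d
    _ = ∑ A : Finset (Fin n) with #A ≤ d, ∏ l ∈ A, k l := by simp only [hGP.1]

/-- Every arrangement in `Λ_d(n,k)` has exactly
`(k+1)·Σ_{j<d} C(n−1,j)·k^j + k^d·Σ_{j=d}^{n−1} C(j−1,d−1)` regions. -/
theorem numRegions_of_isGPPH {d n k : ℕ} (hd : 1 ≤ d) (hn : 1 ≤ n) (hk : 1 ≤ k)
    {ι : Type} [Fintype ι] (g : ι → Fin n) (H : ι → Set (EuclideanSpace ℝ (Fin d)))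
    (hGP : IsGPPH d n g (fun _ => k) H) :
    numRegions (⋃ i, H i) =
      (k + 1) * ∑ j ∈ Finset.range d, Nat.choose (n - 1) j * k ^ j
        + k ^ d * ∑ j ∈ Finset.Icc d (n - 1), Nat.choose (j - 1) (d - 1) := by
  have : Nonempty (Fin n) := Fin.pos_iff_nonempty.1 hn
  simpa [sum_card_le_pow_card_eq_add k hd] using numRegions_of_isGPPH_general hGP

end
end

section
/- Fix k ≥ 1 and let r : ℕ≥1 × ℕ≥1 → ℕ be defined by r(1,d) = k+1 for all d ≥ 1, r(n,1) = k·n + 1 for all n ≥ 1, and r(n,d) = k·r(n−1,d−1) + r(n−1,d) for n,d > 1. Then for all n,d ≥ 1, r(n,d) = (k+1)·Σ_{j=0}^{d−1} C(n−1,j)·k^j + k^d·Σ_{j=d}^{n−1} C(j−1,d−1), where the second sum is empty when n−1 < d. -/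
/-!
By the hockey-stick identity the second sum is `C(n−1,d)`, so the claimed value of `r(n,d)` is a
truncated binomial sum plus one binomial term. Pascal's rule, applied to each of the two parts,
shows that it satisfies the same recursion as `r`, and the boundary values agree.
-/

open Finset

lemma sum_Icc_choose_pred (m d : ℕ) :
    ∑ j ∈ Icc (d + 1) m, (j - 1).choose d = m.choose (d + 1) := by
  cases m with
  | zero => simp
  | succ m => simp [← map_add_right_Icc, Nat.sum_Icc_choose]

section CommSemiring

variable {R : Type*} [CommSemiring R] (k : R)

lemma sum_range_choose_succ_mul_pow (m d : ℕ) :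
    ∑ j ∈ range (d + 1), ((m + 1).choose j : R) * k ^ j
      = k * ∑ j ∈ range d, (m.choose j : R) * k ^ j
        + ∑ j ∈ range (d + 1), (m.choose j : R) * k ^ j := by
  have pascal (j : ℕ) : ((m + 1).choose (j + 1) : R) * k ^ (j + 1)
      = k * ((m.choose j : R) * k ^ j) + (m.choose (j + 1) : R) * k ^ (j + 1) := by
    rw [Nat.choose_succ_succ]
    push_cast
    ring
  simp only [sum_range_succ' _ d, pascal, sum_add_distrib, mul_sum, Nat.choose_zero_right,
    add_assoc]

/-- The value of `r(m + 1, d + 1)` with the second sum of binomial coefficients evaluated. Both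
arguments are shifted by one, so that they range over all of `ℕ`. -/
def recursionClosedForm (m d : ℕ) : R :=
  (k + 1) * ∑ j ∈ range (d + 1), (m.choose j : R) * k ^ j + k ^ (d + 1) * (m.choose (d + 1) : R)

lemma recursionClosedForm_zero_left (d : ℕ) : recursionClosedForm k 0 d = k + 1 := by
  simp [recursionClosedForm, sum_range_succ']

lemma recursionClosedForm_zero_right (m : ℕ) : recursionClosedForm k m 0 = k * (m + 1 : ℕ) + 1 := by
  simp only [recursionClosedForm, zero_add, sum_range_one, Nat.choose_zero_right,
    Nat.choose_one_right]
  push_cast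
  ring

lemma recursionClosedForm_succ_succ (m d : ℕ) :
    recursionClosedForm k (m + 1) (d + 1)
      = k * recursionClosedForm k m d + recursionClosedForm k m (d + 1) := by
  simp only [recursionClosedForm, sum_range_choose_succ_mul_pow k m (d + 1),
    Nat.choose_succ_succ m (d + 1)]
  push_cast
  ring

variable {k} in
lemma eq_recursionClosedForm {s : ℕ → ℕ → R}
    (zero_left : ∀ d, s 0 d = k + 1)
    (zero_right : ∀ m, s m 0 = k * (m + 1 : ℕ) + 1)
    (succ_succ : ∀ m d, s (m + 1) (d + 1) = k * s m d + s m (d + 1)) (m d : ℕ) :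
    s m d = recursionClosedForm k m d := by
  induction m generalizing d with
  | zero => rw [zero_left, recursionClosedForm_zero_left]
  | succ m ih =>
    cases d with
    | zero => rw [zero_right, recursionClosedForm_zero_right]
    | succ d => rw [succ_succ, recursionClosedForm_succ_succ, ih, ih]

theorem recursion_unfolds_general (r : ℕ → ℕ → R)
    (h1 : ∀ d, 1 ≤ d → r 1 d = k + 1)
    (h2 : ∀ n, 1 ≤ n → r n 1 = k * n + 1)
    (hrec : ∀ n d, 1 < n → 1 < d → r n d = k * r (n - 1) (d - 1) + r (n - 1) d)
    (n d : ℕ) (hn : 1 ≤ n) (hd : 1 ≤ d) :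
    r n d = (k + 1) * ∑ j ∈ range d, ((n - 1).choose j : R) * k ^ j
      + k ^ d * ∑ j ∈ Icc d (n - 1), ((j - 1).choose (d - 1) : R) := by
  obtain ⟨m, rfl⟩ := Nat.exists_eq_add_of_le' hn
  obtain ⟨e, rfl⟩ := Nat.exists_eq_add_of_le' hd
  have r_eq : r (m + 1) (e + 1) = recursionClosedForm k m e :=
    eq_recursionClosedForm (s := fun m e ↦ r (m + 1) (e + 1))
      (fun e ↦ h1 (e + 1) (by lia)) (fun m ↦ h2 (m + 1) (by lia))
      (fun m e ↦ hrec (m + 2) (e + 2) (by lia) (by lia)) m e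
  simp only [r_eq, recursionClosedForm, Nat.add_sub_cancel, ← Nat.cast_sum, sum_Icc_choose_pred]

end CommSemiring

/-- The recursion `r(1,d) = k+1`, `r(n,1) = k·n+1`,
`r(n,d) = k·r(n−1,d−1) + r(n−1,d)` unfolds to
`r(n,d) = (k+1)·Σ_{j<d} C(n−1,j)·k^j + k^d·Σ_{j=d}^{n−1} C(j−1,d−1)`. -/
theorem recursion_unfolds (k : ℕ) (hk : 1 ≤ k) (r : ℕ → ℕ → ℕ)
    (h1 : ∀ d, 1 ≤ d → r 1 d = k + 1)
    (h2 : ∀ n, 1 ≤ n → r n 1 = k * n + 1)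
    (hrec : ∀ n d, 1 < n → 1 < d → r n d = k * r (n - 1) (d - 1) + r (n - 1) d) :
    ∀ n d, 1 ≤ n → 1 ≤ d →
      r n d = (k + 1) * ∑ j ∈ Finset.range d, Nat.choose (n - 1) j * k ^ j
        + k ^ d * ∑ j ∈ Finset.Icc d (n - 1), Nat.choose (j - 1) (d - 1) :=
  recursion_unfolds_general k r h1 h2 hrec
end

section
/- Let ω_1,…,ω_n ∈ ℝ^d be nonzero, a_j < b_j real numbers, and let ℋ be the arrangement consisting of the 2n hyperplanes H_{1,j} = {x : ω_jᵀx = b_j} and H_{2,j} = {x : ω_jᵀx = a_j} (j = 1,…,n), and assume ℋ ∈ Λ_d(n,2). Let R^±(ℋ) be the set of regions C of ℋ such that for every x ∈ C and every j ∈ {1,…,n}, either ω_jᵀx ≤ a_j or ω_jᵀx ≥ b_j. Then |R^±(ℋ)| ≤ Σ_{j=0}^{d} C(n,j). -/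
noncomputable section

/-- The arrangement of the `2n` hyperplanes `{x : ωⱼᵀx = bⱼ}`, `{x : ωⱼᵀx = aⱼ}`. -/
def pmHyperplanes {d : ℕ} (n : ℕ) (ω : Fin n → EuclideanSpace ℝ (Fin d)) (a b : Fin n → ℝ)
    (p : Bool × Fin n) : Set (EuclideanSpace ℝ (Fin d)) :=
  {x | (∑ t, ω p.2 t * x t) = if p.1 then b p.2 else a p.2}

/-- An arrangement of the `±` type: `a_j < b_j`, the `ω_j` are nonzero, and the `2n`
hyperplanes `{ωⱼᵀx = bⱼ}`, `{ωⱼᵀx = aⱼ}`, grouped into the `n` parallel pairs, are in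
general position modulo parallel hyperplanes, i.e. the arrangement lies in `Λ_d(n,2)`. -/
def IsPMArrangement (d n : ℕ) (ω : Fin n → EuclideanSpace ℝ (Fin d)) (a b : Fin n → ℝ) :
    Prop :=
  (∀ j, ω j ≠ 0) ∧ (∀ j, a j < b j) ∧
    IsGPPH d n Prod.snd (fun _ => 2) (pmHyperplanes n ω a b)

/-- `R^±(ℋ)`: the regions `C` of the arrangement such that every `x ∈ C` satisfies, for
every `j`, either `ωⱼᵀx ≤ aⱼ` or `ωⱼᵀx ≥ bⱼ`. -/
def pmRegions {d : ℕ} (n : ℕ) (ω : Fin n → EuclideanSpace ℝ (Fin d)) (a b : Fin n → ℝ) :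
    Set (Set (EuclideanSpace ℝ (Fin d))) :=
  {C ∈ regionsOf (⋃ p, pmHyperplanes n ω a b p) |
    ∀ x ∈ C, ∀ j, (∑ t, ω j t * x t) ≤ a j ∨ b j ≤ ∑ t, ω j t * x t}

/-!
A point outside the hyperplanes and outside all slabs `aⱼ < ωⱼᵀx < bⱼ` has a sign pattern: the set
of `j` with `ωⱼᵀx > bⱼ`. The points with a given pattern form a convex set that avoids the
hyperplanes, so it lies in a single region, and the regions in question are no more numerous than
the nonempty patterns. If these patterns shatter a set `S` of indices, then subtracting points with
complementary patterns on `S` realises every choice of signs of `(ωⱼᵀz)_{j ∈ S}`, which forces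
`(ωⱼ)_{j ∈ S}` to be linearly independent. Hence the patterns have VC dimension at most the rank of
`ω`, and the Sauer–Shelah lemma bounds their number.
-/

section Shattering

open Finset

lemma card_le_sum_choose_of_vcDim_le {α : Type*} [Fintype α] [DecidableEq α]
    {𝒜 : Finset (Finset α)} {r : ℕ} (h : 𝒜.vcDim ≤ r) :
    #𝒜 ≤ ∑ k ∈ range (r + 1), (Fintype.card α).choose k :=
  calc #𝒜 ≤ #𝒜.shatterer := card_le_card_shatterer 𝒜
    _ ≤ ∑ k ∈ Iic 𝒜.vcDim, (Fintype.card α).choose k := card_shatterer_le_sum_vcDim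
    _ ≤ ∑ k ∈ range (r + 1), (Fintype.card α).choose k := by
      refine sum_le_sum_of_subset fun k hk => ?_
      rw [mem_Iic] at hk
      exact mem_range.2 (by lia)

lemma exists_mem_preimage_val_eq_of_shatters {α : Type*} [DecidableEq α] {𝒜 : Finset (Finset α)}
    {S : Finset α} (hS : 𝒜.Shatters S) (T : Set S) :
    ∃ U ∈ 𝒜, ((↑) : S → α) ⁻¹' (U : Set α) = T := by
  classical
  obtain ⟨U, hU, hUT⟩ := hS (filter_subset (· ∈ ((↑) '' T : Set α)) S)
  refine ⟨U, hU, Set.ext fun j => ?_⟩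
  have := congrArg ((j : α) ∈ ·) hUT
  simpa using this

end Shattering

section SignPatterns

variable {ι E : Type*} [AddCommGroup E] [Module ℝ E]

lemma linearIndependent_of_forall_exists_signs {f : ι → Module.Dual ℝ E}
    (hf : ∀ T : Set ι, ∃ z, (∀ j ∈ T, 0 < f j z) ∧ ∀ j ∉ T, f j z < 0) :
    LinearIndependent ℝ f := by
  rw [linearIndependent_iff']
  intro s c hc i hi
  obtain ⟨z, hz_pos, hz_neg⟩ := hf {j | 0 < c j}
  have hterm_nonneg (j : ι) : 0 ≤ c j * f j z := by
    rcases lt_or_ge 0 (c j) with hj | hj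
    · exact (mul_pos hj (hz_pos j hj)).le
    · exact mul_nonneg_of_nonpos_of_nonpos hj (hz_neg j hj.not_gt).le
  have hsum : ∑ j ∈ s, c j * f j z = 0 := by
    simpa using congrArg (· z) hc
  have hterm : c i * f i z = 0 :=
    (Finset.sum_eq_zero_iff_of_nonneg fun j _ => hterm_nonneg j).1 hsum i hi
  have hfz : f i z ≠ 0 := by
    by_cases hci : 0 < c i
    · exact (hz_pos i hci).ne'
    · exact (hz_neg i hci).ne
  exact (mul_eq_zero.1 hterm).resolve_right hfz

lemma card_le_finrank_range_of_linearIndependent_subtype {K V : Type*} [DivisionRing K]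
    [AddCommGroup V] [Module K V] [Finite ι] {v : ι → V} {S : Finset ι}
    (hS : LinearIndependent K fun j : S => v j) : S.card ≤ (Set.range v).finrank K := by
  have : FiniteDimensional K (Submodule.span K (Set.range v)) :=
    FiniteDimensional.span_of_finite K (Set.finite_range v)
  calc S.card = (Set.range fun j : S => v j).finrank K := by
        rw [Set.finrank, finrank_span_eq_card hS, Fintype.card_coe]
    _ ≤ (Set.range v).finrank K :=
        Submodule.finrank_mono (Submodule.span_mono (Set.range_comp_subset_range _ v))

/-- The points lying above the slab `aⱼ ≤ fⱼ x ≤ bⱼ` for `j ∈ T` and below it for `j ∉ T`. -/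
def outerCell (f : ι → Module.Dual ℝ E) (a b : ι → ℝ) (T : Set ι) : Set E :=
  {x | (∀ j ∈ T, b j < f j x) ∧ ∀ j ∉ T, f j x < a j}

/-- The sign patterns `T` realised by some point outside all slabs, as a set family to which
shattering applies. -/
def outerPatterns [Fintype ι] (f : ι → Module.Dual ℝ E) (a b : ι → ℝ) : Finset (Finset ι) :=
  open scoped Classical in {T | (outerCell f a b T).Nonempty}

/-- The union of the hyperplanes `fⱼ x = aⱼ` and `fⱼ x = bⱼ`. -/
def slabWalls (f : ι → Module.Dual ℝ E) (a b : ι → ℝ) : Set E :=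
  {x | ∃ j, f j x = a j ∨ f j x = b j}

variable {f : ι → Module.Dual ℝ E} {a b : ι → ℝ}

lemma mem_outerPatterns [Fintype ι] {T : Finset ι} :
    T ∈ outerPatterns f a b ↔ (outerCell f a b T).Nonempty := by
  simp [outerPatterns]

lemma convex_outerCell (T : Set ι) : Convex ℝ (outerCell f a b T) := by
  have hcell : outerCell f a b T =
      (⋂ j ∈ T, {x | b j < f j x}) ∩ ⋂ j ∈ Tᶜ, {x | f j x < a j} := by
    ext x
    simp [outerCell]
  rw [hcell]
  exact (convex_iInter₂ fun j _ => convex_halfSpace_gt (f j).isLinear (b j)).inter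
    (convex_iInter₂ fun j _ => convex_halfSpace_lt (f j).isLinear (a j))

lemma outerCell_subset_compl_slabWalls (hab : ∀ j, a j ≤ b j) (T : Set ι) :
    outerCell f a b T ⊆ (slabWalls f a b)ᶜ := by
  rintro x ⟨habove, hbelow⟩ ⟨j, hj⟩
  have := hab j
  by_cases hjT : j ∈ T
  · have := habove j hjT
    rcases hj with hj | hj <;> linarith
  · have := hbelow j hjT
    rcases hj with hj | hj <;> linarith

lemma mem_outerCell_setOf_le {x : E} (hx : x ∉ slabWalls f a b)
    (hout : ∀ j, f j x ≤ a j ∨ b j ≤ f j x) : x ∈ outerCell f a b {j | b j ≤ f j x} :=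
  ⟨fun j hj => lt_of_le_of_ne hj fun h => hx ⟨j, .inr h.symm⟩,
    fun j hj => lt_of_le_of_ne ((hout j).resolve_right hj) fun h => hx ⟨j, .inl h⟩⟩

lemma outerCell_comp_preimage_nonempty {κ : Type*} (g : κ → ι) {T : Set ι}
    (hT : (outerCell f a b T).Nonempty) :
    (outerCell (f ∘ g) (a ∘ g) (b ∘ g) (g ⁻¹' T)).Nonempty :=
  hT.imp fun _ hx => ⟨fun j hj => hx.1 (g j) hj, fun j hj => hx.2 (g j) hj⟩

lemma linearIndependent_of_forall_outerCell_nonempty (hab : ∀ j, a j ≤ b j)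
    (hf : ∀ T, (outerCell f a b T).Nonempty) : LinearIndependent ℝ f := by
  refine linearIndependent_of_forall_exists_signs fun T => ?_
  obtain ⟨x, hx_above, hx_below⟩ := hf T
  obtain ⟨y, hy_above, hy_below⟩ := hf Tᶜ
  refine ⟨x - y, fun j hj => ?_, fun j hj => ?_⟩
  · rw [map_sub, sub_pos]
    exact (hy_below j (not_not.2 hj)).trans ((hab j).trans_lt (hx_above j hj))
  · rw [map_sub, sub_neg]
    exact (hx_below j hj).trans ((hab j).trans_lt (hy_above j hj))

lemma vcDim_outerPatterns_le [Fintype ι] [DecidableEq ι] (hab : ∀ j, a j ≤ b j) :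
    (outerPatterns f a b).vcDim ≤ (Set.range f).finrank ℝ := by
  refine Finset.sup_le fun S hS => card_le_finrank_range_of_linearIndependent_subtype ?_
  refine linearIndependent_of_forall_outerCell_nonempty (fun j : S => hab j) fun T => ?_
  obtain ⟨U, hU, rfl⟩ := exists_mem_preimage_val_eq_of_shatters (Finset.mem_shatterer.1 hS) T
  exact outerCell_comp_preimage_nonempty Subtype.val (mem_outerPatterns.1 hU)

end SignPatterns

section Regions

variable {ι E : Type*} [AddCommGroup E] [Module ℝ E] [TopologicalSpace E]

/-- The analogue of `pmRegions` for linear functionals on a real topological vector space: the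
connected components of the complement of the walls `fⱼ x = aⱼ`, `fⱼ x = bⱼ` that avoid all open
slabs `aⱼ < fⱼ x < bⱼ`. -/
def outerRegions (f : ι → Module.Dual ℝ E) (a b : ι → ℝ) : Set (Set E) :=
  {C | (∃ x ∈ (slabWalls f a b)ᶜ, C = connectedComponentIn (slabWalls f a b)ᶜ x) ∧
    ∀ x ∈ C, ∀ j, f j x ≤ a j ∨ b j ≤ f j x}

variable {f : ι → Module.Dual ℝ E} {a b : ι → ℝ}

lemma eq_of_mem_outerRegions_of_mem {C D : Set E} (hC : C ∈ outerRegions f a b)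
    (hD : D ∈ outerRegions f a b) {x : E} (hxC : x ∈ C) (hxD : x ∈ D) : C = D := by
  obtain ⟨⟨y, -, rfl⟩, -⟩ := hC
  obtain ⟨⟨z, -, rfl⟩, -⟩ := hD
  rw [connectedComponentIn_eq hxC, connectedComponentIn_eq hxD]

variable [IsTopologicalAddGroup E] [ContinuousSMul ℝ E]

lemma exists_outerPattern_subset_of_mem_outerRegions [Fintype ι] (hab : ∀ j, a j ≤ b j)
    {C : Set E} (hC : C ∈ outerRegions f a b) :
    ∃ T ∈ outerPatterns f a b, outerCell f a b T ⊆ C := by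
  classical
  obtain ⟨⟨x, hx, rfl⟩, hout⟩ := hC
  have hxT : x ∈ outerCell f a b ({j | b j ≤ f j x} : Finset ι) := by
    simpa using mem_outerCell_setOf_le hx (hout x (mem_connectedComponentIn hx))
  exact ⟨_, mem_outerPatterns.2 ⟨x, hxT⟩,
    (convex_outerCell _).isPreconnected.subset_connectedComponentIn hxT
      (outerCell_subset_compl_slabWalls hab _)⟩

lemma ncard_outerRegions_le_card_outerPatterns [Fintype ι] (hab : ∀ j, a j ≤ b j) :
    (outerRegions f a b).ncard ≤ (outerPatterns f a b).card := by
  choose! pattern hmem hsub using fun C : Set E =>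
    exists_outerPattern_subset_of_mem_outerRegions (f := f) hab (C := C)
  rw [← Set.ncard_coe_finset]
  refine Set.ncard_le_ncard_of_injOn pattern hmem fun C hC D hD hCD => ?_
  obtain ⟨x, hx⟩ := mem_outerPatterns.1 (hmem C hC)
  exact eq_of_mem_outerRegions_of_mem hC hD (hsub C hC hx) (hsub D hD (hCD ▸ hx))

theorem pmRegions_card_le_general [Fintype ι] (f : ι → Module.Dual ℝ E) (a b : ι → ℝ)
    (hab : ∀ j, a j ≤ b j) :
    (outerRegions f a b).ncard ≤
      ∑ k ∈ Finset.range ((Set.range f).finrank ℝ + 1), (Fintype.card ι).choose k := by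
  classical
  exact (ncard_outerRegions_le_card_outerPatterns hab).trans
    (card_le_sum_choose_of_vcDim_le (vcDim_outerPatterns_le hab))

end Regions

section EuclideanSpace

variable {d n : ℕ} (ω : Fin n → EuclideanSpace ℝ (Fin d)) (a b : Fin n → ℝ)

lemma iUnion_pmHyperplanes_eq_slabWalls :
    ⋃ p, pmHyperplanes n ω a b p = slabWalls (fun j => innerₗ _ (ω j)) a b := by
  ext x
  simp [pmHyperplanes, slabWalls, PiLp.inner_apply, mul_comm, exists_or]

lemma pmRegions_eq_outerRegions :
    pmRegions n ω a b = outerRegions (fun j => innerₗ _ (ω j)) a b := by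
  simp [pmRegions, regionsOf, outerRegions, iUnion_pmHyperplanes_eq_slabWalls, PiLp.inner_apply,
    mul_comm]

lemma finrank_range_innerₗ_le :
    (Set.range fun j => innerₗ (EuclideanSpace ℝ (Fin d)) (ω j)).finrank ℝ ≤ d :=
  (Submodule.finrank_le _).trans_eq (by simp)

end EuclideanSpace

/-- For an arrangement of the `±` type in `Λ_d(n,2)`,
`|R^±(ℋ)| ≤ Σ_{j=0}^{d} C(n,j)`. -/
theorem pmRegions_card_le {d n : ℕ} (ω : Fin n → EuclideanSpace ℝ (Fin d)) (a b : Fin n → ℝ)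
    (hPM : IsPMArrangement d n ω a b) :
    (pmRegions n ω a b).ncard ≤ ∑ j ∈ Finset.range (d + 1), Nat.choose n j := by
  grw [pmRegions_eq_outerRegions, pmRegions_card_le_general _ a b fun j => (hPM.2.1 j).le,
    finrank_range_innerₗ_le, Fintype.card_fin]

end
end

section
/- For every integer L ≥ 2 and every integer N ≥ 1 there exist affine maps A_1 : ℝ → ℝ^{2N}, A_2,…,A_{L−1} : ℝ^{2N} → ℝ^{2N} and A_L : ℝ^{2N} → ℝ such that, setting z := A_L ∘ (ReLU ∘ A_{L−1}) ∘ … ∘ (ReLU ∘ A_1) and f(x) := z(x) + x, the function f : ℝ → ℝ has at least (2N)^{L−1}/2 stable fixed points. In particular, taking N = 1, there are L-layer ReLU networks of width 2 whose associated map f has at least 2^{L−2} stable fixed points, so the number of stable fixed points can grow as Ω(2^L) in the number of layers L. -/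
/-!
Let `T` be the triangle wave `T s = dist (s, 2ℤ)`. On `[0, m]` it is a combination of the `m` hinge
functions `relu (s - i)`, `i < m`, so one hidden layer of width `m` computes `t ↦ T (m t)` on
`[0, 1]`. Since `T s ≡ ± s` modulo `2`, we have `T (m * T s) = T (m * s)`; hence stacking `n + 1`
such layers computes `t ↦ T (M t)` with `M = m ^ (n + 1)`. Scaling the output by `M⁻¹` gives the
descending pieces of the wave slope `-1`, so that `f` is locally constant on each of the `⌊M / 2⌋`
descending pieces in `[0, 1]`, and the output bias puts its value at the midpoint of the piece.
-/

noncomputable section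

/-- The rectified linear unit. -/
def relu (t : ℝ) : ℝ := max t 0

/-- Iterated middle layers: `midIter Wm um j` is `(ReLU ∘ A_{j+1}) ∘ … ∘ (ReLU ∘ A_2)`,
where `A_{l+1}` is the affine map given by the matrix `Wm (l-1)` and bias `um (l-1)`. -/
def midIter {m : ℕ} (Wm : ℕ → Matrix (Fin m) (Fin m) ℝ) (um : ℕ → Fin m → ℝ) :
    ℕ → (Fin m → ℝ) → Fin m → ℝ
  | 0 => fun v => v
  | j + 1 => fun v i => relu (((Wm j).mulVec (midIter Wm um j v) + um j) i)

/-- A stable fixed point of `f : ℝ → ℝ`: a fixed point in a neighborhood of which `f` is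
differentiable and where `|f′| < 1`. -/
def IsStableFixedPoint1 (f : ℝ → ℝ) (x : ℝ) : Prop :=
  f x = x ∧ (∃ ε > 0, ∀ y ∈ Metric.ball x ε, DifferentiableAt ℝ f y) ∧ |deriv f x| < 1

open scoped Topology

theorem isStableFixedPoint1_of_eventuallyEq_const {f : ℝ → ℝ} {x : ℝ} (h : f =ᶠ[𝓝 x] fun _ => x) :
    IsStableFixedPoint1 f x := by
  refine ⟨h.eq_of_nhds, ?_, by simp [h.deriv_eq]⟩
  obtain ⟨ε, hε, hball⟩ := Metric.eventually_nhds_iff_ball.1 h.eventuallyEq_nhds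
  exact ⟨ε, hε, fun y hy => (hball y hy).differentiableAt_iff.2 (differentiableAt_const x)⟩

/-- The triangle wave of period `2`, which rises from `0` to `1` on `[0, 1]` and falls back to `0`
on `[1, 2]`: the distance to the nearest even integer, encoded as the norm on `ℝ / 2ℤ`. -/
def triangleWave (s : ℝ) : ℝ := ‖(s : AddCircle (2 : ℝ))‖

theorem triangleWave_mem_Icc (s : ℝ) : triangleWave s ∈ Set.Icc (0 : ℝ) 1 :=
  ⟨norm_nonneg _, (AddCircle.norm_le_half_period 2 two_ne_zero).trans_eq (by norm_num)⟩

theorem triangleWave_periodic : Function.Periodic triangleWave 2 := fun s => by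
  rw [triangleWave, AddCircle.coe_add_period, triangleWave]

theorem triangleWave_eq_abs {s : ℝ} (hs : |s| ≤ 1) : triangleWave s = |s| :=
  (AddCircle.norm_coe_eq_abs_iff 2 two_ne_zero).2 (by simpa using hs)

theorem coe_triangleWave (s : ℝ) :
    (triangleWave s : AddCircle (2 : ℝ)) = s ∨ (triangleWave s : AddCircle (2 : ℝ)) = -s := by
  have hcoe : ((s - round (2⁻¹ * s) * 2 : ℝ) : AddCircle (2 : ℝ)) = s := by
    rw [AddCircle.coe_sub, ← zsmul_eq_mul, AddCircle.coe_zsmul, AddCircle.coe_period, smul_zero,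
      sub_zero]
  rw [triangleWave, AddCircle.norm_eq]
  rcases abs_choice (s - round (2⁻¹ * s) * 2) with habs | habs
  · exact .inl (by rw [habs, hcoe])
  · exact .inr (by rw [habs, AddCircle.coe_neg, hcoe])

theorem triangleWave_intCast_mul_triangleWave (k : ℤ) (s : ℝ) :
    triangleWave (k * triangleWave s) = triangleWave (k * s) := by
  have hnorm (u : ℝ) : triangleWave (k * u) = ‖k • (u : AddCircle (2 : ℝ))‖ := by
    rw [triangleWave, ← zsmul_eq_mul, AddCircle.coe_zsmul]
  rw [hnorm, hnorm]
  rcases coe_triangleWave s with hpos | hneg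
  · rw [hpos]
  · rw [hneg, smul_neg, norm_neg]

theorem triangleWave_eq_of_mem_Icc (r : ℕ) {s : ℝ} (hs : s ∈ Set.Icc (r : ℝ) (r + 1)) :
    triangleWave s = (-1) ^ r * (s - r - 1 / 2) + 1 / 2 := by
  obtain ⟨hrs, hsr⟩ := hs
  rcases Nat.even_or_odd' r with ⟨k, rfl | rfl⟩ <;> push_cast at hrs hsr ⊢
  · have habs : |s - k * 2| = s - k * 2 := abs_of_nonneg (by linarith)
    rw [← triangleWave_periodic.sub_nat_mul_eq k, triangleWave_eq_abs (by linarith), habs]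
    simp only [even_two, Even.mul_right, Even.neg_pow, one_pow]
    ring
  · have habs : |s - (k + 1 : ℕ) * 2| = -(s - (k + 1 : ℕ) * 2) :=
      abs_of_nonpos (by push_cast; linarith)
    rw [← triangleWave_periodic.sub_nat_mul_eq (k + 1),
      triangleWave_eq_abs (by rw [habs]; push_cast; linarith), habs]
    simp only [pow_succ, even_two, Even.mul_right, Even.neg_pow, one_pow]
    push_cast
    ring

/-- The coefficient of the hinge `relu (s - i)` in the triangle wave on `s ≥ 0`, that is, the change
of slope of the wave at the breakpoint `i`. -/
def hingeCoeff (i : ℕ) : ℝ := if i = 0 then 1 else 2 * (-1) ^ i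

theorem sum_hingeCoeff_mul_sub (r : ℕ) (s : ℝ) :
    ∑ i ∈ Finset.range (r + 1), hingeCoeff i * (s - i) = (-1) ^ r * (s - r - 1 / 2) + 1 / 2 := by
  induction r with
  | zero => simp [hingeCoeff]
  | succ r ih =>
    rw [Finset.sum_range_succ, ih, hingeCoeff, if_neg r.succ_ne_zero]
    push_cast
    ring

theorem sum_hingeCoeff_mul_relu (m : ℕ) {s : ℝ} (hs : s ∈ Set.Icc (0 : ℝ) m) :
    ∑ i ∈ Finset.range m, hingeCoeff i * relu (s - i) = triangleWave s := by
  induction m with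
  | zero =>
    have hs0 : s = 0 := by simpa using hs
    simp [hs0, triangleWave]
  | succ m ih =>
    rcases le_total s m with hsm | hms
    · rw [Finset.sum_range_succ, ih ⟨hs.1, hsm⟩, relu, max_eq_right (sub_nonpos.2 hsm), mul_zero,
        add_zero]
    · have hactive : ∀ i ∈ Finset.range (m + 1), relu (s - i) = s - i := fun i hi => by
        have him : (i : ℝ) ≤ m := by exact_mod_cast Finset.mem_range_succ_iff.1 hi
        exact max_eq_left (by linarith)
      rw [triangleWave_eq_of_mem_Icc m ⟨hms, by exact_mod_cast hs.2⟩, ← sum_hingeCoeff_mul_sub]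
      exact Finset.sum_congr rfl fun i hi => by rw [hactive i hi]

theorem sum_hingeCoeff_mul_relu_natCast_mul_triangleWave (m : ℕ) (s : ℝ) :
    ∑ i : Fin m, hingeCoeff i * relu (m * triangleWave s - (i : ℕ)) = triangleWave (m * s) := by
  obtain ⟨h0, h1⟩ := triangleWave_mem_Icc s
  have hmem : m * triangleWave s ∈ Set.Icc (0 : ℝ) m :=
    ⟨by positivity, mul_le_of_le_one_right m.cast_nonneg h1⟩
  rw [Fin.sum_univ_eq_sum_range fun i => hingeCoeff i * relu (m * triangleWave s - i),
    sum_hingeCoeff_mul_relu m hmem]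
  exact_mod_cast triangleWave_intCast_mul_triangleWave m s

/-- The weights of the middle layers: every neuron receives `m` times the triangle wave read off
from the hinges of the previous layer. -/
def foldWeight (m : ℕ) : Matrix (Fin m) (Fin m) ℝ := Matrix.of fun _ j => m * hingeCoeff j

theorem foldWeight_mulVec_apply {m : ℕ} (v : Fin m → ℝ) (i : Fin m) :
    (foldWeight m).mulVec v i = m * ∑ j : Fin m, hingeCoeff j * v j := by
  simp only [Matrix.mulVec, dotProduct, foldWeight, Matrix.of_apply, mul_assoc, Finset.mul_sum]

/-- The bias of every hidden layer, which puts the kink of neuron `i` at the breakpoint `i`. -/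
def foldBias (m : ℕ) (i : Fin m) : ℝ := -(i : ℕ)

theorem midIter_foldWeight (m n : ℕ) {t : ℝ} (ht : t ∈ Set.Icc (0 : ℝ) 1) (i : Fin m) :
    midIter (fun _ => foldWeight m) (fun _ => foldBias m) n
        (fun i => relu (m * t + foldBias m i)) i =
      relu (m * triangleWave (m ^ n * t) - (i : ℕ)) := by
  induction n generalizing i with
  | zero =>
    have habs : |t| = t := abs_of_nonneg ht.1
    rw [pow_zero, one_mul, triangleWave_eq_abs (habs.trans_le ht.2), habs]
    rfl
  | succ n ih =>
    simp only [midIter, Pi.add_apply, foldWeight_mulVec_apply, ih,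
      sum_hingeCoeff_mul_relu_natCast_mul_triangleWave]
    rw [foldBias, ← sub_eq_add_neg, ← mul_assoc (m : ℝ) (m ^ n), ← pow_succ']

theorem sum_hingeCoeff_mul_midIter_foldWeight (m n : ℕ) {t : ℝ} (ht : t ∈ Set.Icc (0 : ℝ) 1) :
    ∑ i : Fin m, hingeCoeff i * midIter (fun _ => foldWeight m) (fun _ => foldBias m) n
        (fun i => relu (m * t + foldBias m i)) i =
      triangleWave (m ^ (n + 1) * t) := by
  simp only [midIter_foldWeight m n ht, sum_hingeCoeff_mul_relu_natCast_mul_triangleWave]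
  rw [pow_succ', mul_assoc]

theorem isStableFixedPoint1_of_eqOn_triangleWave {f : ℝ → ℝ} {M : ℝ} {j : ℕ} (hj : 2 * j + 2 ≤ M)
    (hf : Set.EqOn f (fun t => M⁻¹ * triangleWave (M * t) - M⁻¹ / 2 + t) (Set.Icc 0 1)) :
    IsStableFixedPoint1 f ((2 * j + 3 / 2) / M) := by
  have hM : 0 < M := by linarith [j.cast_nonneg (α := ℝ)]
  apply isStableFixedPoint1_of_eventuallyEq_const
  have hpiece : Set.Ioo ((2 * j + 1) / M) ((2 * j + 2) / M) ∈ 𝓝 ((2 * j + 3 / 2) / M) :=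
    Ioo_mem_nhds (by gcongr; norm_num) (by gcongr; norm_num)
  filter_upwards [hpiece] with t ht
  have hlower : 2 * j + 1 < M * t := (div_lt_iff₀' hM).1 ht.1
  have hupper : M * t < 2 * j + 2 := (lt_div_iff₀' hM).1 ht.2
  have ht01 : t ∈ Set.Icc (0 : ℝ) 1 :=
    ⟨le_trans (by positivity) ht.1.le, ht.2.le.trans ((div_le_one hM).2 hj)⟩
  have hdescending : triangleWave (M * t) = 2 * j + 2 - M * t := by
    rw [triangleWave_eq_of_mem_Icc (2 * j + 1)
      ⟨by push_cast; exact hlower.le, by push_cast; linarith⟩, (odd_two_mul_add_one j).neg_one_pow]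
    push_cast
    ring
  rw [hf ht01]
  dsimp only
  rw [hdescending]
  field_simp
  ring

theorem exists_relu_net_many_stable_fixed_points_general (n m : ℕ) :
    ∃ (a₁ b₁ : Fin m → ℝ) (Wm : ℕ → Matrix (Fin m) (Fin m) ℝ) (um : ℕ → Fin m → ℝ)
      (wL : Fin m → ℝ) (cL : ℝ) (S : Finset ℝ),
      (∀ x ∈ S, IsStableFixedPoint1
        (fun t => ((∑ i, wL i * midIter Wm um n (fun i => relu (a₁ i * t + b₁ i)) i)
          + cL) + t) x) ∧
      m ^ (n + 1) / 2 ≤ S.card := by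
  set M : ℝ := (m : ℝ) ^ (n + 1) with hM
  refine ⟨fun _ => m, foldBias m, fun _ => foldWeight m, fun _ => foldBias m,
    fun i => M⁻¹ * hingeCoeff i, -(M⁻¹ / 2),
    (Finset.range (m ^ (n + 1) / 2)).image fun j : ℕ => (2 * j + 3 / 2) / M, ?_, ?_⟩
  · refine Finset.forall_mem_image.2 fun j hj => ?_
    have hjM : 2 * j + 2 ≤ m ^ (n + 1) := by
      have := Finset.mem_range.1 hj
      omega
    refine isStableFixedPoint1_of_eqOn_triangleWave (by rw [hM]; exact_mod_cast hjM) fun t ht => ?_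
    simp only [mul_assoc, ← Finset.mul_sum, sum_hingeCoeff_mul_midIter_foldWeight m n ht,
      ← sub_eq_add_neg, M]
  · rcases eq_or_ne M 0 with hM0 | hM0
    · have hm : m ^ (n + 1) = 0 := by rw [hM] at hM0; exact_mod_cast hM0
      simp [hm]
    · have hinj : Function.Injective fun j : ℕ => (2 * j + 3 / 2) / M := fun j k hjk => by
        simpa [hM0] using hjk
      rw [Finset.card_image_of_injective _ hinj, Finset.card_range]

/-- For every `L ≥ 2` and `N ≥ 1` there is an `L`-layer ReLU network of
width `2N`, `z = A_L ∘ (ReLU ∘ A_{L−1}) ∘ … ∘ (ReLU ∘ A_1) : ℝ → ℝ`, such that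
`f(x) = z(x) + x` has at least `(2N)^{L−1}/2` stable fixed points; in particular (`N = 1`)
the number of stable fixed points can grow as `Ω(2^L)` in the number of layers `L`. -/
theorem exists_relu_net_many_stable_fixed_points (L N : ℕ) (hL : 2 ≤ L) (hN : 1 ≤ N) :
    ∃ (a₁ b₁ : Fin (2 * N) → ℝ) (Wm : ℕ → Matrix (Fin (2 * N)) (Fin (2 * N)) ℝ)
      (um : ℕ → Fin (2 * N) → ℝ) (wL : Fin (2 * N) → ℝ) (cL : ℝ) (S : Finset ℝ),
      (∀ x ∈ S, IsStableFixedPoint1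
        (fun t => ((∑ i, wL i * midIter Wm um (L - 2) (fun i => relu (a₁ i * t + b₁ i)) i)
          + cL) + t) x) ∧
      (2 * N) ^ (L - 1) / 2 ≤ S.card := by
  obtain ⟨n, rfl⟩ := Nat.exists_eq_add_of_le' hL
  exact exists_relu_net_many_stable_fixed_points_general n (2 * N)

end
end
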